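/- arXiv:1202.0973 — 2 statements merged into one kernel-verified Lean document; each statement's English description precedes it below -/
import Mathlib

section
/- Let u be homogeneous of degree zero on ℝ^{3}_+ with E_R(u) = ∫_{B_R^+} |∇u|² x_3^a dX finite, a = 1 - s ∈ (0,1), and let u_R^± be the horizontal domain perturbations u_R^±(X + ± φ(X/R)e_1) = u(X) for a fixed cutoff φ. Then there exists C ≥ 0 (depending on φ and u) such that E_R(u_R^+) + E_R(u_R^-) - 2E_R(u) ≤ C R^{-s} for all sufficiently large R. -/
open MeasureTheory

/-- Horizontal perturbation map `Y(X) = X + σ φ(X/R) e₁`. -/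
noncomputable def pertMap (n : ℕ) (φ : EuclideanSpace ℝ (Fin (n + 1)) → ℝ) (σ R : ℝ)
    (X : EuclideanSpace ℝ (Fin (n + 1))) : EuclideanSpace ℝ (Fin (n + 1)) :=
  X + (σ * φ (R⁻¹ • X)) • (EuclideanSpace.single 0 1 : EuclideanSpace ℝ (Fin (n + 1)))

/-- The perturbed function `u_R^σ`, defined by `u_R^σ(Y(X)) = u(X)`. -/
noncomputable def pertFun (n : ℕ) (φ : EuclideanSpace ℝ (Fin (n + 1)) → ℝ) (σ R : ℝ)
    (u : EuclideanSpace ℝ (Fin (n + 1)) → ℝ) : EuclideanSpace ℝ (Fin (n + 1)) → ℝ :=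
  u ∘ Function.invFun (pertMap n φ σ R)

/-- The weighted Dirichlet energy `E_R(v) = ∫_{B_R^+} |∇v|² x_{n+1}^a dX`. -/
noncomputable def wEnergy (n : ℕ) (a : ℝ) (v : EuclideanSpace ℝ (Fin (n + 1)) → ℝ) (R : ℝ) :
    ENNReal :=
  ∫⁻ X in {X : EuclideanSpace ℝ (Fin (n + 1)) | ‖X‖ < R ∧ 0 < X (Fin.last n)},
    ENNReal.ofReal (‖gradient v X‖ ^ 2 * (X (Fin.last n)) ^ a)





lemma aux_inner_gradient {f : (EuclideanSpace ℝ (Fin 3)) → ℝ} (x v : (EuclideanSpace ℝ (Fin 3))) :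
    inner ℝ (gradient f x) v = fderiv ℝ f x v := by
  simp [gradient]

lemma aux_measurable_gradient (f : (EuclideanSpace ℝ (Fin 3)) → ℝ) : Measurable (gradient f) := by
  unfold gradient
  exact ((InnerProductSpace.toDual ℝ (EuclideanSpace ℝ (Fin 3))).symm.continuous.measurable).comp (measurable_fderiv ℝ f)

lemma aux_measSet (R : ℝ) :
    MeasurableSet {X : (EuclideanSpace ℝ (Fin 3)) | ‖X‖ < R ∧ 0 < X (Fin.last 2)} := by
  apply IsOpen.measurableSet
  apply IsOpen.inter
  · exact isOpen_lt continuous_norm continuous_const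
  · exact isOpen_lt continuous_const (EuclideanSpace.proj (𝕜 := ℝ) (Fin.last 2)).continuous

/-- scaling -/
lemma aux_scaling (a : ℝ) (u : (EuclideanSpace ℝ (Fin 3)) → ℝ)
    (hdiff : ∀ X : (EuclideanSpace ℝ (Fin 3)), 0 < X (Fin.last 2) → DifferentiableAt ℝ u X)
    (hhom : ∀ X : (EuclideanSpace ℝ (Fin 3)), ∀ t : ℝ, 0 < t → u (t • X) = u X) (R : ℝ) (hR : 0 < R) :
    wEnergy 2 a u R = ENNReal.ofReal (R ^ (1 + a)) * wEnergy 2 a u 1 := by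
  have himg : {X : (EuclideanSpace ℝ (Fin 3)) | ‖X‖ < R ∧ 0 < X (Fin.last 2)} =
      (fun X : (EuclideanSpace ℝ (Fin 3)) => R • X) '' {X : (EuclideanSpace ℝ (Fin 3)) | ‖X‖ < 1 ∧ 0 < X (Fin.last 2)} := by
    ext Y
    constructor
    · rintro ⟨h1, h2⟩
      refine ⟨R⁻¹ • Y, ⟨?_, ?_⟩, by simp [smul_smul, hR.ne']⟩
      · rw [norm_smul, Real.norm_eq_abs, abs_of_pos (inv_pos.2 hR), inv_mul_lt_iff₀ hR]; simpa using h1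
      · simp only [PiLp.smul_apply, smul_eq_mul]; positivity
    · rintro ⟨X, ⟨h1, h2⟩, rfl⟩
      refine ⟨?_, ?_⟩
      · simp only [norm_smul, Real.norm_eq_abs, abs_of_pos hR]; nlinarith
      · simp only [PiLp.smul_apply, smul_eq_mul]; positivity
  unfold wEnergy
  rw [himg, lintegral_image_eq_lintegral_abs_det_fderiv_mul volume (aux_measSet 1)
    (f := fun X : (EuclideanSpace ℝ (Fin 3)) => R • X) (f' := fun _ => R • ContinuousLinearMap.id ℝ (EuclideanSpace ℝ (Fin 3)))
    (fun x _ => ((hasFDerivAt_id x).const_smul R).hasFDerivWithinAt)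
    (fun x _ y _ h => smul_right_injective _ hR.ne' h), ← lintegral_const_mul']
  swap
  · exact ENNReal.ofReal_ne_top
  apply setLIntegral_congr_fun (aux_measSet 1)
  rintro X ⟨_, hX⟩
  have hRX : 0 < (R • X) (Fin.last 2) := by
    simp only [PiLp.smul_apply, smul_eq_mul]; positivity
  have hg : gradient u X = R • gradient u (R • X) := by
    apply ext_inner_right ℝ
    intro v
    rw [inner_smul_left, aux_inner_gradient, aux_inner_gradient]
    have h1 : HasFDerivAt (fun X : (EuclideanSpace ℝ (Fin 3)) => u (R • X))
        ((fderiv ℝ u (R • X)).comp (R • ContinuousLinearMap.id ℝ (EuclideanSpace ℝ (Fin 3)))) X :=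
      HasFDerivAt.comp X (hdiff _ hRX).hasFDerivAt ((hasFDerivAt_id X).const_smul R)
    have h2 : (fun X : (EuclideanSpace ℝ (Fin 3)) => u (R • X)) = u := funext fun X => hhom X R hR
    rw [h2] at h1
    rw [h1.fderiv]; simp
  have hdet : (R • ContinuousLinearMap.id ℝ (EuclideanSpace ℝ (Fin 3))).det = R ^ 3 := by
    rw [ContinuousLinearMap.det]
    simp
  simp only [hdet]
  rw [← ENNReal.ofReal_mul (by positivity), ← ENNReal.ofReal_mul (by positivity)]
  congr 1
  rw [hg, norm_smul, Real.norm_eq_abs, abs_of_pos hR, abs_of_pos (by positivity)]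
  simp only [PiLp.smul_apply, smul_eq_mul]
  rw [Real.mul_rpow hR.le hX.le, Real.rpow_add hR, Real.rpow_one]
  ring

/-- algebra of the transformed density -/
noncomputable def dens (g p e : (EuclideanSpace ℝ (Fin 3))) : ℝ :=
  (1 + inner ℝ p e) * ‖g‖ ^ 2 - 2 * inner ℝ g e * inner ℝ g p
    + (inner ℝ g e) ^ 2 * ‖p‖ ^ 2 / (1 + inner ℝ p e)

lemma aux_alg (h g p e : (EuclideanSpace ℝ (Fin 3))) (hq : 0 < 1 + inner ℝ p e)
    (hg : g = h + (inner ℝ h e : ℝ) • p) :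
    (1 + inner ℝ p e) * ‖h‖ ^ 2 = dens g p e := by
  have h1 : inner ℝ g e = inner ℝ h e * (1 + inner ℝ p e) := by
    rw [hg, inner_add_left, inner_smul_left]; simp; ring
  have h2 : inner ℝ g p = inner ℝ h p + inner ℝ h e * ‖p‖ ^ 2 := by
    rw [hg, inner_add_left, inner_smul_left, real_inner_self_eq_norm_sq]; simp
  have h3 : ‖g‖ ^ 2 = ‖h‖ ^ 2 + 2 * (inner ℝ h e * inner ℝ h p) + (inner ℝ h e) ^ 2 * ‖p‖ ^ 2 := by
    rw [hg, norm_add_sq_real, inner_smul_right, norm_smul, mul_pow, Real.norm_eq_abs, sq_abs]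
  unfold dens
  rw [h1, h2, h3]
  field_simp
  ring

lemma aux_sum (g p e : (EuclideanSpace ℝ (Fin 3))) (he : ‖e‖ = 1) (m : ℝ) (hp : ‖p‖ ≤ m) (hm : m ≤ 1 / 2) :
    dens g p e + dens g (-p) e ≤ (2 + 3 * m ^ 2) * ‖g‖ ^ 2 := by
  have hq := abs_real_inner_le_norm p e
  rw [he, mul_one] at hq
  have hq' := abs_le.1 (hq.trans (hp.trans hm))
  have hge := abs_real_inner_le_norm g e
  rw [he, mul_one] at hge
  have hge2 : (inner ℝ g e : ℝ) ^ 2 ≤ ‖g‖ ^ 2 := sq_le_sq' (by linarith [(abs_le.1 hge).1]) (abs_le.1 hge).2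
  unfold dens
  rw [inner_neg_left, inner_neg_right, norm_neg]
  set q : ℝ := inner ℝ p e
  set t : ℝ := inner ℝ g e
  have e1 : t ^ 2 * ‖p‖ ^ 2 / (1 + q) + t ^ 2 * ‖p‖ ^ 2 / (1 + -q)
      = t ^ 2 * ‖p‖ ^ 2 * (2 / (1 - q ^ 2)) := by
    have : 1 + q ≠ 0 := by linarith
    have : 1 - q ≠ 0 := by linarith
    have : 1 - q ^ 2 ≠ 0 := by nlinarith
    rw [← sub_eq_add_neg]
    field_simp
    ring
  have e2 : 2 / (1 - q ^ 2) ≤ 3 := by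
    rw [div_le_iff₀ (by nlinarith)]; nlinarith
  have e3 : t ^ 2 * ‖p‖ ^ 2 ≤ ‖g‖ ^ 2 * m ^ 2 := by gcongr
  have e4 : t ^ 2 * ‖p‖ ^ 2 * (2 / (1 - q ^ 2)) ≤ ‖g‖ ^ 2 * m ^ 2 * 3 := by
    gcongr
    apply div_nonneg <;> nlinarith
  linarith

lemma aux_map (φ : (EuclideanSpace ℝ (Fin 3)) → ℝ) (hφ : Differentiable ℝ φ) (M : NNReal)
    (hM : ∀ x, ‖fderiv ℝ φ x‖₊ ≤ M) (σ R : ℝ) (hσ : |σ| = 1) (hR : 0 < R)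
    (hMR : 2 * (M : ℝ) ≤ R) :
    Function.Surjective (pertMap 2 φ σ R) ∧ AntilipschitzWith 2 (pertMap 2 φ σ R) := by
  have hlip : ∀ x y, |φ (R⁻¹ • x) - φ (R⁻¹ • y)| ≤ 1 / 2 * ‖x - y‖ := by
    intro x y
    have h := (lipschitzWith_of_nnnorm_fderiv_le hφ hM).dist_le_mul (R⁻¹ • x) (R⁻¹ • y)
    rw [dist_smul₀, dist_eq_norm, dist_eq_norm, Real.norm_eq_abs, Real.norm_eq_abs,
      abs_of_pos (inv_pos.2 hR)] at h
    refine h.trans ?_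
    rw [← mul_assoc]
    gcongr
    rw [← div_eq_mul_inv, div_le_iff₀ hR]
    linarith
  have hlip2 : ∀ x y, ‖(σ * φ (R⁻¹ • x)) • (EuclideanSpace.single 0 1 : (EuclideanSpace ℝ (Fin 3)))
      - (σ * φ (R⁻¹ • y)) • (EuclideanSpace.single 0 1 : (EuclideanSpace ℝ (Fin 3)))‖ ≤ 1 / 2 * ‖x - y‖ := by
    intro x y
    rw [← sub_smul, ← mul_sub, norm_smul, norm_mul, Real.norm_eq_abs, hσ, Real.norm_eq_abs]
    simpa using hlip x y
  constructor
  · intro Y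
    have hc : ContractingWith (1 / 2)
        (fun x : (EuclideanSpace ℝ (Fin 3)) => Y - (σ * φ (R⁻¹ • x)) • (EuclideanSpace.single 0 1 : (EuclideanSpace ℝ (Fin 3)))) := by
      refine ⟨by rw [← NNReal.coe_lt_coe]; norm_num, LipschitzWith.of_dist_le_mul fun x y => ?_⟩
      rw [dist_eq_norm, dist_eq_norm, sub_sub_sub_cancel_left, norm_sub_rev x y]
      simpa using hlip2 y x
    refine ⟨hc.fixedPoint _, ?_⟩
    have := hc.fixedPoint_isFixedPt
    unfold Function.IsFixedPt at this
    unfold pertMap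
    exact (eq_sub_iff_add_eq.1 this.symm)
  · refine AntilipschitzWith.of_le_mul_dist fun x y => ?_
    rw [dist_eq_norm, dist_eq_norm]
    have h1 := hlip2 x y
    have h2 : x - y = (pertMap 2 φ σ R x - pertMap 2 φ σ R y)
      - ((σ * φ (R⁻¹ • x)) • (EuclideanSpace.single 0 1 : (EuclideanSpace ℝ (Fin 3)))
      - (σ * φ (R⁻¹ • y)) • (EuclideanSpace.single 0 1 : (EuclideanSpace ℝ (Fin 3)))) := by
      unfold pertMap; abel
    have h3 := norm_sub_le (pertMap 2 φ σ R x - pertMap 2 φ σ R y)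
      ((σ * φ (R⁻¹ • x)) • (EuclideanSpace.single 0 1 : (EuclideanSpace ℝ (Fin 3)))
      - (σ * φ (R⁻¹ • y)) • (EuclideanSpace.single 0 1 : (EuclideanSpace ℝ (Fin 3))))
    rw [← h2] at h3
    simp only [NNReal.coe_ofNat]
    linarith

/-- derivative of the perturbation map -/
noncomputable def dMap (p : (EuclideanSpace ℝ (Fin 3))) : (EuclideanSpace ℝ (Fin 3)) →L[ℝ] (EuclideanSpace ℝ (Fin 3)) :=
  ContinuousLinearMap.id ℝ (EuclideanSpace ℝ (Fin 3))
    + (InnerProductSpace.toDual ℝ (EuclideanSpace ℝ (Fin 3)) p).smulRight (EuclideanSpace.single 0 1 : (EuclideanSpace ℝ (Fin 3)))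

lemma dMap_apply (p v : (EuclideanSpace ℝ (Fin 3))) :
    dMap p v = v + (inner ℝ p v : ℝ) • (EuclideanSpace.single 0 1 : (EuclideanSpace ℝ (Fin 3))) := by
  simp [dMap]

lemma dMap_det (p : (EuclideanSpace ℝ (Fin 3))) :
    (dMap p).det = 1 + inner ℝ p (EuclideanSpace.single 0 1 : (EuclideanSpace ℝ (Fin 3))) := by
  have h : (dMap p : (EuclideanSpace ℝ (Fin 3)) →ₗ[ℝ] (EuclideanSpace ℝ (Fin 3))) = LinearMap.transvection
      ((InnerProductSpace.toDual ℝ (EuclideanSpace ℝ (Fin 3)) p : (EuclideanSpace ℝ (Fin 3)) →L[ℝ] ℝ) : (EuclideanSpace ℝ (Fin 3)) →ₗ[ℝ] ℝ)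
      (EuclideanSpace.single 0 1 : (EuclideanSpace ℝ (Fin 3))) := by
    ext1 v
    simp [dMap, LinearMap.transvection.apply]
  rw [ContinuousLinearMap.det, h, LinearMap.transvection.det]
  simp

lemma aux_deriv (φ : (EuclideanSpace ℝ (Fin 3)) → ℝ) (hφ : Differentiable ℝ φ) (σ R : ℝ) (X : (EuclideanSpace ℝ (Fin 3))) :
    HasFDerivAt (pertMap 2 φ σ R) (dMap (σ • R⁻¹ • gradient φ (R⁻¹ • X))) X := by
  have h1 : HasFDerivAt (fun X : (EuclideanSpace ℝ (Fin 3)) => φ (R⁻¹ • X))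
      ((fderiv ℝ φ (R⁻¹ • X)).comp (R⁻¹ • ContinuousLinearMap.id ℝ (EuclideanSpace ℝ (Fin 3)))) X :=
    HasFDerivAt.comp X (hφ _).hasFDerivAt ((hasFDerivAt_id X).const_smul R⁻¹)
  have h2 := (hasFDerivAt_id X).add
    ((h1.const_mul σ).smul_const (EuclideanSpace.single 0 1 : (EuclideanSpace ℝ (Fin 3))))
  refine HasFDerivAt.congr_fderiv h2 ?_
  ext1 v
  rw [dMap_apply, inner_smul_left, inner_smul_left, aux_inner_gradient]
  simp

lemma aux_pert (a : ℝ) (φ : (EuclideanSpace ℝ (Fin 3)) → ℝ) (hφ : Differentiable ℝ φ) (M : NNReal)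
    (hM : ∀ x, ‖fderiv ℝ φ x‖₊ ≤ M) (K : ℝ) (hK : ∀ x, |φ x| ≤ K)
    (hφ0 : ∀ x, 3 / 4 ≤ ‖x‖ → φ x = 0) (u : (EuclideanSpace ℝ (Fin 3)) → ℝ)
    (hdiff : ∀ X : (EuclideanSpace ℝ (Fin 3)), 0 < X (Fin.last 2) → DifferentiableAt ℝ u X)
    (σ R : ℝ) (hσ : |σ| = 1) (hR : 0 < R)
    (hMR : 2 * (M : ℝ) ≤ R) (hKR : 4 * K < R) :
    wEnergy 2 a (pertFun 2 φ σ R u) R =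
      ∫⁻ X in {X : (EuclideanSpace ℝ (Fin 3)) | ‖X‖ < R ∧ 0 < X (Fin.last 2)},
        ENNReal.ofReal (dens (gradient u X) (σ • R⁻¹ • gradient φ (R⁻¹ • X))
          (EuclideanSpace.single 0 1 : (EuclideanSpace ℝ (Fin 3))) * (X (Fin.last 2)) ^ a) := by
  obtain ⟨hsurj, hanti⟩ := aux_map φ hφ M hM σ R hσ hR hMR
  have hcoord : ∀ X : (EuclideanSpace ℝ (Fin 3)), (pertMap 2 φ σ R X) (Fin.last 2) = X (Fin.last 2) := by
    intro X
    simp [pertMap]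
  have hout : ∀ X : (EuclideanSpace ℝ (Fin 3)), 3 / 4 * R ≤ ‖X‖ → pertMap 2 φ σ R X = X := by
    intro X hX
    have : φ (R⁻¹ • X) = 0 := by
      apply hφ0
      rw [norm_smul, Real.norm_eq_abs, abs_of_pos (inv_pos.2 hR), inv_mul_eq_div, le_div_iff₀ hR]
      exact hX
    simp [pertMap, this]
  have himg : pertMap 2 φ σ R '' {X : (EuclideanSpace ℝ (Fin 3)) | ‖X‖ < R ∧ 0 < X (Fin.last 2)}
      = {X : (EuclideanSpace ℝ (Fin 3)) | ‖X‖ < R ∧ 0 < X (Fin.last 2)} := by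
    ext Y
    constructor
    · rintro ⟨X, ⟨h1, h2⟩, rfl⟩
      refine ⟨?_, by rw [hcoord]; exact h2⟩
      by_cases hX : 3 / 4 * R ≤ ‖X‖
      · rw [hout X hX]; exact h1
      · push Not at hX
        have h3 : ‖pertMap 2 φ σ R X‖ ≤ ‖X‖ + |φ (R⁻¹ • X)| := by
          unfold pertMap
          refine (norm_add_le _ _).trans ?_
          rw [norm_smul, norm_mul, Real.norm_eq_abs, hσ, Real.norm_eq_abs]
          simp
        linarith [hK (R⁻¹ • X)]
    · rintro ⟨h1, h2⟩
      obtain ⟨X, rfl⟩ := hsurj Y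
      refine ⟨X, ⟨?_, by rw [hcoord] at h2; exact h2⟩, rfl⟩
      by_contra hX
      push Not at hX
      rw [hout X (by linarith)] at h1
      linarith
  unfold wEnergy
  conv_lhs => rw [← himg]
  rw [lintegral_image_eq_lintegral_abs_det_fderiv_mul volume (aux_measSet R)
    (fun X _ => (aux_deriv φ hφ σ R X).hasFDerivWithinAt) hanti.injective.injOn]
  apply setLIntegral_congr_fun (aux_measSet R)
  rintro X ⟨_, hX⟩
  have hpn : ‖σ • R⁻¹ • gradient φ (R⁻¹ • X)‖ ≤ 1 / 2 := by
    have h1 : ‖gradient φ (R⁻¹ • X)‖ ≤ M := by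
      rw [gradient, LinearIsometryEquiv.norm_map]
      exact_mod_cast hM (R⁻¹ • X)
    rw [norm_smul, norm_smul, Real.norm_eq_abs, hσ, one_mul, Real.norm_eq_abs,
      abs_of_pos (inv_pos.2 hR), inv_mul_eq_div, div_le_iff₀ hR]
    linarith
  have hder := aux_deriv φ hφ σ R X
  simp only
  set p : (EuclideanSpace ℝ (Fin 3)) := σ • R⁻¹ • gradient φ (R⁻¹ • X) with hp
  clear_value p
  have hq : 0 < 1 + inner ℝ p (EuclideanSpace.single 0 1 : (EuclideanSpace ℝ (Fin 3))) := by
    have := abs_real_inner_le_norm p (EuclideanSpace.single 0 1 : (EuclideanSpace ℝ (Fin 3)))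
    rw [show ‖(EuclideanSpace.single 0 1 : (EuclideanSpace ℝ (Fin 3)))‖ = 1 by simp, mul_one] at this
    linarith [(abs_le.1 this).1]
  have hli : Function.LeftInverse (Function.invFun (pertMap 2 φ σ R)) (pertMap 2 φ σ R) :=
    Function.leftInverse_invFun hanti.injective
  have hri : Function.RightInverse (Function.invFun (pertMap 2 φ σ R)) (pertMap 2 φ σ R) :=
    Function.rightInverse_invFun hsurj
  have hdet0 : (dMap p).det ≠ 0 := by rw [dMap_det]; exact hq.ne'
  have hinv : HasFDerivAt (Function.invFun (pertMap 2 φ σ R))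
      (((dMap p).toContinuousLinearEquivOfDetNeZero hdet0).symm : (EuclideanSpace ℝ (Fin 3)) →L[ℝ] (EuclideanSpace ℝ (Fin 3)))
      (pertMap 2 φ σ R X) := by
    apply HasFDerivAt.of_local_left_inverse (f := pertMap 2 φ σ R)
    · exact (hanti.to_rightInverse hri).continuous.continuousAt
    · rw [hli X, ContinuousLinearMap.coe_toContinuousLinearEquivOfDetNeZero]
      exact hder
    · exact Filter.Eventually.of_forall hri
  have hv : DifferentiableAt ℝ (pertFun 2 φ σ R u) (pertMap 2 φ σ R X) := by
    unfold pertFun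
    apply DifferentiableAt.comp
    · rw [hli X]; exact hdiff X hX
    · exact hinv.differentiableAt
  have hcomp : pertFun 2 φ σ R u ∘ pertMap 2 φ σ R = u := by
    funext Z
    simp only [pertFun, Function.comp_apply, hli Z]
  have hg : gradient u X = gradient (pertFun 2 φ σ R u) (pertMap 2 φ σ R X)
      + (inner ℝ (gradient (pertFun 2 φ σ R u) (pertMap 2 φ σ R X))
        (EuclideanSpace.single 0 1 : (EuclideanSpace ℝ (Fin 3))) : ℝ) • p := by
    apply ext_inner_right ℝ
    intro v
    have h1 := hv.hasFDerivAt.comp X hder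
    rw [hcomp] at h1
    rw [aux_inner_gradient, h1.fderiv, ContinuousLinearMap.comp_apply, dMap_apply, map_add,
      map_smul, inner_add_left, inner_smul_left, aux_inner_gradient, aux_inner_gradient]
    simp [mul_comm]
  rw [← ENNReal.ofReal_mul (abs_nonneg _), dMap_det, abs_of_pos hq, hcoord, ← mul_assoc,
    aux_alg _ _ p _ hq hg]

lemma aux_dens_nonneg (g p e : (EuclideanSpace ℝ (Fin 3))) (he : ‖e‖ = 1) (hp : ‖p‖ ≤ 1 / 2) : 0 ≤ dens g p e := by
  have hq : 0 < 1 + inner ℝ p e := by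
    have := abs_real_inner_le_norm p e
    rw [he, mul_one] at this
    linarith [(abs_le.1 this).1]
  rw [← aux_alg (g - ((inner ℝ g e : ℝ) / (1 + inner ℝ p e)) • p) g p e hq]
  · positivity
  · rw [inner_sub_left, inner_smul_left]
    have : (inner ℝ g e : ℝ) - (inner ℝ g e : ℝ) / (1 + inner ℝ p e) * inner ℝ p e
      = (inner ℝ g e : ℝ) / (1 + inner ℝ p e) := by
      field_simp; ring
    simp only [conj_trivial]
    rw [this]; abel

/-- the case `n = 2`: for `u` homogeneous of degree zero on `ℝ³₊` with finite
weighted energy, `E_R(u_R^+) + E_R(u_R^-) - 2 E_R(u) ≤ C R^{-s}` for all large `R`,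
where `a = 1 - s`. -/
theorem stmt_13 (s : ℝ) (hs : s ∈ Set.Ioo (0 : ℝ) 1) (a : ℝ) (haa : a = 1 - s)
    (φ : EuclideanSpace ℝ (Fin 3) → ℝ)
    (hφ : ContDiff ℝ (⊤ : ℕ∞) φ) (hφc : HasCompactSupport φ)
    (hφ1 : ∀ x, ‖x‖ ≤ 1 / 2 → φ x = 1) (hφ0 : ∀ x, 3 / 4 ≤ ‖x‖ → φ x = 0)
    (u : EuclideanSpace ℝ (Fin 3) → ℝ)
    (hdiff : ∀ X : EuclideanSpace ℝ (Fin 3), 0 < X (Fin.last 2) → DifferentiableAt ℝ u X)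
    (hhom : ∀ X : EuclideanSpace ℝ (Fin 3), ∀ t : ℝ, 0 < t → u (t • X) = u X)
    (hfin : ∀ R : ℝ, 0 < R → wEnergy 2 a u R ≠ ⊤) :
    ∃ C : ℝ, 0 ≤ C ∧ ∃ R₀ : ℝ, 0 < R₀ ∧ ∀ R : ℝ, R₀ ≤ R →
      wEnergy 2 a (pertFun 2 φ 1 R u) R + wEnergy 2 a (pertFun 2 φ (-1) R u) R
        ≤ 2 * wEnergy 2 a u R + ENNReal.ofReal (C * R ^ (-s)) := by
  have hφd : Differentiable ℝ φ := hφ.differentiable (by simp)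
  have hφ'c : Continuous (fderiv ℝ φ) := hφ.continuous_fderiv (by simp)
  obtain ⟨K, hK⟩ := hφ.continuous.bounded_above_of_compact_support hφc
  obtain ⟨M0, hM0⟩ := hφ'c.bounded_above_of_compact_support (hφc.fderiv ℝ)
  set M : NNReal := M0.toNNReal with hMdef
  have hM : ∀ x, ‖fderiv ℝ φ x‖₊ ≤ M := by
    intro x
    rw [← NNReal.coe_le_coe, coe_nnnorm]
    exact (hM0 x).trans (Real.le_coe_toNNReal M0)
  have hE1 := hfin 1 one_pos
  refine ⟨3 * (M : ℝ) ^ 2 * (wEnergy 2 a u 1).toReal, by positivity,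
    max 1 (max (2 * M) (4 * K + 1)), by positivity, fun R hR => ?_⟩
  have hR1 : 1 ≤ R := (le_max_left _ _).trans hR
  have hR2 : 2 * (M : ℝ) ≤ R := (le_max_left _ _).trans ((le_max_right _ _).trans hR)
  have hR3 : 4 * K < R := by
    have := (le_max_right _ _).trans ((le_max_right _ _).trans hR)
    linarith
  have hR0 : 0 < R := by linarith
  have hM' : ∀ X : (EuclideanSpace ℝ (Fin 3)), ‖R⁻¹ • gradient φ (R⁻¹ • X)‖ ≤ M / R := by
    intro X
    have h1 : ‖gradient φ (R⁻¹ • X)‖ ≤ M := by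
      rw [gradient, LinearIsometryEquiv.norm_map]
      exact_mod_cast hM (R⁻¹ • X)
    rw [norm_smul, Real.norm_eq_abs, abs_of_pos (inv_pos.2 hR0), inv_mul_eq_div]
    gcongr
  have hmR : (M : ℝ) / R ≤ 1 / 2 := by
    rw [div_le_iff₀ hR0]; linarith
  have hnn : ∀ (σ : ℝ), |σ| = 1 → ∀ X : (EuclideanSpace ℝ (Fin 3)), 0 ≤ dens (gradient u X)
      (σ • R⁻¹ • gradient φ (R⁻¹ • X)) (EuclideanSpace.single 0 1 : (EuclideanSpace ℝ (Fin 3))) := by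
    intro σ hσ X
    apply aux_dens_nonneg _ _ _ (by simp)
    rw [norm_smul, Real.norm_eq_abs, hσ, one_mul]
    exact (hM' X).trans hmR
  rw [aux_pert a φ hφd M hM K hK hφ0 u hdiff 1 R (by simp) hR0 hR2 hR3,
    aux_pert a φ hφd M hM K hK hφ0 u hdiff (-1) R (by simp) hR0 hR2 hR3,
    ← lintegral_add_left]
  swap
  · have hu := aux_measurable_gradient u
    have hp : Measurable fun X : (EuclideanSpace ℝ (Fin 3)) => (1 : ℝ) • R⁻¹ • gradient φ (R⁻¹ • X) :=
      (((aux_measurable_gradient φ).comp (measurable_const_smul R⁻¹)).const_smul R⁻¹).const_smul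
        (1 : ℝ)
    have hc : Measurable fun X : (EuclideanSpace ℝ (Fin 3)) => X (Fin.last 2) :=
      (EuclideanSpace.proj (𝕜 := ℝ) (Fin.last 2)).continuous.measurable
    unfold dens
    apply Measurable.ennreal_ofReal
    apply Measurable.mul _ (hc.pow_const a)
    refine Measurable.add (Measurable.sub ?_ ?_) ?_
    · exact ((hp.inner_const).const_add 1).mul (hu.norm.pow_const 2)
    · exact ((hu.inner_const).const_mul 2).mul (hu.inner hp)
    · exact (((hu.inner_const).pow_const 2).mul (hp.norm.pow_const 2)).div
        ((hp.inner_const).const_add 1)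
  have hle : ∫⁻ X in {X : (EuclideanSpace ℝ (Fin 3)) | ‖X‖ < R ∧ 0 < X (Fin.last 2)},
        (ENNReal.ofReal (dens (gradient u X) ((1 : ℝ) • R⁻¹ • gradient φ (R⁻¹ • X))
          (EuclideanSpace.single 0 1 : (EuclideanSpace ℝ (Fin 3))) * (X (Fin.last 2)) ^ a)
        + ENNReal.ofReal (dens (gradient u X) ((-1 : ℝ) • R⁻¹ • gradient φ (R⁻¹ • X))
          (EuclideanSpace.single 0 1 : (EuclideanSpace ℝ (Fin 3))) * (X (Fin.last 2)) ^ a))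
      ≤ ENNReal.ofReal (2 + 3 * ((M : ℝ) / R) ^ 2) * wEnergy 2 a u R := by
    unfold wEnergy
    rw [← lintegral_const_mul' _ _ ENNReal.ofReal_ne_top]
    apply setLIntegral_mono' (aux_measSet R)
    rintro X ⟨_, hX⟩
    have hXa : 0 ≤ (X (Fin.last 2)) ^ a := Real.rpow_nonneg hX.le a
    rw [← ENNReal.ofReal_add (mul_nonneg (hnn 1 (by simp) X) hXa)
      (mul_nonneg (hnn (-1) (by simp) X) hXa), ← ENNReal.ofReal_mul (by positivity), ← add_mul,
      ← mul_assoc]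
    apply ENNReal.ofReal_le_ofReal
    apply mul_le_mul_of_nonneg_right _ hXa
    rw [one_smul, neg_one_smul]
    exact aux_sum _ _ _ (by simp) _ (hM' X) hmR
  refine hle.trans ?_
  rw [ENNReal.ofReal_add (by norm_num) (by positivity), add_mul]
  apply add_le_add
  · simp
  · rw [aux_scaling a u hdiff hhom R hR0, ← mul_assoc, ← ENNReal.ofReal_mul (by positivity)]
    conv_lhs => rw [← ENNReal.ofReal_toReal hE1]
    rw [← ENNReal.ofReal_mul (by positivity)]
    apply ENNReal.ofReal_le_ofReal
    apply le_of_eq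
    have : R ^ (1 + a) = R ^ (-s) * R ^ 2 := by
      rw [← Real.rpow_natCast R 2, ← Real.rpow_add hR0]
      congr 1
      rw [haa]; push_cast; ring
    rw [this]
    field_simp
end

section
/- A half-plane is an s-minimal cone in ℝ²: for every s ∈ (0,1), the set H = {x ∈ ℝ² : x_2 > 0} satisfies Per_s(H, B_R) ≤ Per_s(F, B_R) for every R > 0 and every measurable F with F \ B_R = H \ B_R. -/
open MeasureTheory

/-- The interaction energy `L(A,B) = ∫_A ∫_B |x-y|^{-(n+s)} dx dy`. -/
noncomputable def interL (n : ℕ) (s : ℝ) (A B : Set (EuclideanSpace ℝ (Fin n))) : ENNReal :=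
  ∫⁻ x in A, ∫⁻ y in B, ENNReal.ofReal (1 / ‖x - y‖ ^ ((n : ℝ) + s))

/-- The fractional `s`-perimeter `Per_s(E, Ω) = L(E ∩ Ω, ℝⁿ \ E) + L(E \ Ω, Ω \ E)`. -/
noncomputable def fracPer (n : ℕ) (s : ℝ) (E Ω : Set (EuclideanSpace ℝ (Fin n))) : ENNReal :=
  interL n s (E ∩ Ω) Eᶜ + interL n s (E \ Ω) (Ω \ E)

abbrev V2 := EuclideanSpace ℝ (Fin 2)

lemma interL_eq (s : ℝ) (A B : Set V2) (hA : MeasurableSet A) (hB : MeasurableSet B) :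
    interL 2 s A B = ∫⁻ z : V2, ENNReal.ofReal (1 / ‖z‖ ^ (((2 : ℕ) : ℝ) + s)) *
      volume (A ∩ {x | x + z ∈ B}) := by
  unfold interL
  set k : V2 → ENNReal := fun z => ENNReal.ofReal (1 / ‖z‖ ^ (((2 : ℕ) : ℝ) + s)) with hk
  have hkm : Measurable k := by
    apply Measurable.ennreal_ofReal
    fun_prop
  have hpre : MeasurableSet {p : V2 × V2 | p.1 + p.2 ∈ B} :=
    (measurable_fst.add measurable_snd) hB
  have hind : Measurable (fun p : V2 × V2 => ({p : V2 × V2 | p.1 + p.2 ∈ B}).indicator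
      (fun q => k q.2) p) := (hkm.comp measurable_snd).indicator hpre
  have h1 : ∀ x : V2, ∫⁻ y in B, ENNReal.ofReal (1 / ‖x - y‖ ^ (((2 : ℕ) : ℝ) + s))
      = ∫⁻ z, ({p : V2 × V2 | p.1 + p.2 ∈ B}).indicator (fun q => k q.2) (x, z) := by
    intro x
    rw [← lintegral_indicator hB, ← lintegral_add_left_eq_self _ x]
    refine lintegral_congr fun z => ?_
    by_cases h : x + z ∈ B <;> simp [Set.indicator, h, hk]
  simp_rw [h1]
  rw [lintegral_lintegral_swap hind.aemeasurable]
  refine lintegral_congr fun z => ?_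
  have hz : MeasurableSet {x : V2 | x + z ∈ B} := (measurable_id.add_const z) hB
  have h2 : (fun x : V2 => ({p : V2 × V2 | p.1 + p.2 ∈ B}).indicator (fun q => k q.2) (x, z))
      = ({x : V2 | x + z ∈ B}).indicator (fun _ => k z) := by
    ext x
    by_cases h : x + z ∈ B <;> simp [Set.indicator, h]
  rw [h2, lintegral_indicator hz, setLIntegral_const, Measure.restrict_apply hz, Set.inter_comm]

lemma measurable_vol (A B : Set V2) (hA : MeasurableSet A) (hB : MeasurableSet B) :
    Measurable fun z : V2 => volume (A ∩ {x | x + z ∈ B}) := by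
  have : MeasurableSet {p : V2 × V2 | p.2 ∈ A ∧ p.2 + p.1 ∈ B} :=
    (measurable_snd hA).inter ((measurable_snd.add measurable_fst) hB)
  exact measurable_measure_prodMk_left this

/-- crossing set -/
def crossD (E Ω : Set V2) (z : V2) : Set V2 :=
  {x | x ∈ E ∧ x + z ∉ E ∧ (x ∈ Ω ∨ x + z ∈ Ω)}

lemma fracPer_eq (s : ℝ) (E Ω : Set V2) (hE : MeasurableSet E) (hΩ : MeasurableSet Ω) :
    fracPer 2 s E Ω = ∫⁻ z : V2, ENNReal.ofReal (1 / ‖z‖ ^ (((2 : ℕ) : ℝ) + s)) *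
      volume (crossD E Ω z) := by
  unfold fracPer
  rw [interL_eq s _ _ (hE.inter hΩ) hE.compl, interL_eq s _ _ (hE.diff hΩ) (hΩ.diff hE),
    ← lintegral_add_left]
  · refine lintegral_congr fun z => ?_
    rw [← mul_add, ← measure_union]
    · congr 2
      ext x
      simp only [crossD, Set.mem_union, Set.mem_inter_iff, Set.mem_ofPred_eq, Set.mem_diff,
        Set.mem_compl_iff]
      tauto
    · rw [Set.disjoint_left]
      rintro x ⟨⟨_, h⟩, _⟩ ⟨⟨_, h'⟩, _⟩
      exact h' h
    · exact (hE.diff hΩ).inter ((measurable_id.add_const z) (hΩ.diff hE))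
  · apply Measurable.mul
    · apply Measurable.ennreal_ofReal
      fun_prop
    · exact measurable_vol _ _ (hE.inter hΩ) hE.compl

lemma cross_balance (E Ω : Set V2) (hE : MeasurableSet E) (hΩ : MeasurableSet Ω) (z : V2) :
    volume (crossD E Ω z) +
      (volume (E ∩ Ω) + volume {x | x + z ∈ E ∧ x + z ∉ Ω ∧ x ∈ Ω}) =
    (volume (E ∩ Ω) + volume {x | x ∈ E ∧ x ∉ Ω ∧ x + z ∈ Ω}) +
      volume {x | x ∉ E ∧ x + z ∈ E ∧ (x ∈ Ω ∨ x + z ∈ Ω)} := by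
  have ht : Measurable (fun x : V2 => x + z) := measurable_id.add_const z
  have hE' : MeasurableSet {x : V2 | x + z ∈ E} := ht hE
  have hΩ' : MeasurableSet {x : V2 | x + z ∈ Ω} := ht hΩ
  have e1 : volume (E ∩ Ω) = volume {x | x + z ∈ E ∧ x + z ∈ Ω} :=
    (measure_preimage_add_right volume z (E ∩ Ω)).symm
  have e2 : volume (E ∩ Ω) + volume {x | x + z ∈ E ∧ x + z ∉ Ω ∧ x ∈ Ω}
      = volume {x | x + z ∈ E ∧ (x ∈ Ω ∨ x + z ∈ Ω)} := by
    rw [e1, ← measure_union]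
    · congr 1
      ext x
      simp only [Set.mem_union, Set.mem_ofPred_eq]
      tauto
    · rw [Set.disjoint_left]
      rintro x ⟨_, h⟩ ⟨_, h', _⟩
      exact h' h
    · exact hE'.inter (hΩ'.compl.inter hΩ)
  have e3 : volume (E ∩ Ω) + volume {x | x ∈ E ∧ x ∉ Ω ∧ x + z ∈ Ω}
      = volume {x | x ∈ E ∧ (x ∈ Ω ∨ x + z ∈ Ω)} := by
    rw [← measure_union]
    · congr 1
      ext x
      simp only [Set.mem_union, Set.mem_ofPred_eq, Set.mem_inter_iff]
      tauto
    · rw [Set.disjoint_left]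
      rintro x ⟨_, h⟩ ⟨_, h', _⟩
      exact h' h
    · exact hE.inter (hΩ.compl.inter hΩ')
  have m1 : MeasurableSet {x | x + z ∈ E ∧ (x ∈ Ω ∨ x + z ∈ Ω)} := hE'.inter (hΩ.union hΩ')
  have m2 : MeasurableSet {x | x ∉ E ∧ x + z ∈ E ∧ (x ∈ Ω ∨ x + z ∈ Ω)} :=
    hE.compl.inter (hE'.inter (hΩ.union hΩ'))
  rw [e2, e3, ← measure_union_add_inter _ m1, ← measure_union_add_inter _ m2]
  congr 2
  · ext x
    simp only [crossD, Set.mem_union, Set.mem_ofPred_eq, Set.mem_inter_iff, Set.mem_compl_iff]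
    tauto
  · ext x
    simp only [crossD, Set.mem_union, Set.mem_ofPred_eq, Set.mem_inter_iff, Set.mem_compl_iff]
    tauto

theorem stmt_18 (s : ℝ) (hs : s ∈ Set.Ioo (0 : ℝ) 1) (R : ℝ) (hR : 0 < R)
    (F : Set (EuclideanSpace ℝ (Fin 2))) (hF : MeasurableSet F)
    (hFH : F \ Metric.ball 0 R = {x : EuclideanSpace ℝ (Fin 2) | 0 < x 1} \ Metric.ball 0 R) :
    fracPer 2 s {x : EuclideanSpace ℝ (Fin 2) | 0 < x 1} (Metric.ball 0 R)
      ≤ fracPer 2 s F (Metric.ball 0 R) := by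
  have hH : MeasurableSet {x : V2 | 0 < x 1} :=
    (isOpen_lt continuous_const (by fun_prop)).measurableSet
  have hB : MeasurableSet (Metric.ball (0 : V2) R) := measurableSet_ball
  rw [fracPer_eq s _ _ hH hB, fracPer_eq s _ _ hF hB]
  refine lintegral_mono fun z => mul_le_mul_right ?_ _
  have hmem : ∀ x : V2, x ∉ Metric.ball (0 : V2) R → (x ∈ F ↔ x ∈ {x : V2 | 0 < x 1}) := by
    intro x hx
    have := Set.ext_iff.1 hFH x
    simp only [Set.mem_diff, hx, not_false_eq_true, and_true] at this
    exact this
  have bF := cross_balance F _ hF hB z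
  have bH := cross_balance _ _ hH hB z
  have fin : ∀ E : Set V2, volume (E ∩ Metric.ball (0 : V2) R) ≠ ⊤ := fun E =>
    ((measure_mono Set.inter_subset_right).trans_lt measure_ball_lt_top).ne
  rcases le_or_gt 0 (z 1) with hz | hz
  · have : crossD {x : V2 | 0 < x 1} (Metric.ball 0 R) z = ∅ := by
      rw [Set.eq_empty_iff_forall_notMem]
      rintro x ⟨h1, h2, _⟩
      apply h2
      simp only [Set.mem_ofPred_eq, PiLp.add_apply] at h1 ⊢
      linarith
    rw [this]
    simp
  · have hU : {x : V2 | x ∉ {x : V2 | 0 < x 1} ∧ x + z ∈ {x : V2 | 0 < x 1} ∧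
        (x ∈ Metric.ball (0 : V2) R ∨ x + z ∈ Metric.ball (0 : V2) R)} = ∅ := by
      rw [Set.eq_empty_iff_forall_notMem]
      rintro x ⟨h1, h2, _⟩
      apply h1
      simp only [Set.mem_ofPred_eq, PiLp.add_apply] at h2 ⊢
      linarith
    have ea : {x : V2 | x ∈ F ∧ x ∉ Metric.ball (0 : V2) R ∧ x + z ∈ Metric.ball (0 : V2) R} =
        {x : V2 | x ∈ {x : V2 | 0 < x 1} ∧ x ∉ Metric.ball (0 : V2) R ∧
          x + z ∈ Metric.ball (0 : V2) R} := by
      ext x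
      have := hmem x
      rw [Set.mem_ofPred_eq, Set.mem_ofPred_eq]
      tauto
    have eb : {x : V2 | x + z ∈ F ∧ x + z ∉ Metric.ball (0 : V2) R ∧ x ∈ Metric.ball (0 : V2) R} =
        {x : V2 | x + z ∈ {x : V2 | 0 < x 1} ∧ x + z ∉ Metric.ball (0 : V2) R ∧
          x ∈ Metric.ball (0 : V2) R} := by
      ext x
      have := hmem (x + z)
      rw [Set.mem_ofPred_eq, Set.mem_ofPred_eq]
      tauto
    rw [hU, measure_empty, add_zero] at bH
    rw [ea, eb] at bF
    have hb : volume {x : V2 | x + z ∈ {x : V2 | 0 < x 1} ∧ x + z ∉ Metric.ball (0 : V2) R ∧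
          x ∈ Metric.ball (0 : V2) R} ≠ ⊤ :=
      ((measure_mono fun x hx => hx.2.2).trans_lt
        (measure_ball_lt_top (x := (0 : V2)) (r := R))).ne
    generalize volume {x : V2 | x + z ∈ {x : V2 | 0 < x 1} ∧ x + z ∉ Metric.ball (0 : V2) R ∧
          x ∈ Metric.ball (0 : V2) R} = b at *
    rw [add_left_comm] at bH bF
    rw [add_assoc] at bF
    have bH' := (ENNReal.add_right_inj (fin _)).1 bH
    have bF' := (ENNReal.add_right_inj (fin _)).1 bF
    refine (ENNReal.add_le_add_iff_right hb).1 ?_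
    rw [bH', bF']
    exact le_self_add
end
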